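/- arXiv:0904.2792 — 6 statements merged into one kernel-verified Lean document; each statement's English description precedes it below -/
import Mathlib

section
/- For all n ≥ 1, the sum of the values of the largest fixed points over all permutations of [n] that have at least one fixed point equals d_{n+1}, the number of derangements of [n+1]. That is, α_n = d_{n+1}. -/
open Classical

noncomputable section

/-- `π` has at least one fixed point. -/
def hasFP {n : ℕ} (π : Equiv.Perm (Fin n)) : Prop := ∃ i, π i = i

/-- The set of (1-based) values of the fixed points of `π`, viewing a permutation of
`Fin n` as a permutation of `[n] = {1, …, n}` via `i ↦ i + 1`. -/
def fixVals {n : ℕ} (π : Equiv.Perm (Fin n)) : Set ℕ :=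
  {k | ∃ i : Fin n, π i = i ∧ (i : ℕ) + 1 = k}

/-- The largest fixed point `ℓ(π)` (in 1-based indexing). -/
def lfp {n : ℕ} (π : Equiv.Perm (Fin n)) : ℕ := sSup (fixVals π)

/-- The smallest fixed point `s(π)` (in 1-based indexing). -/
def sfp {n : ℕ} (π : Equiv.Perm (Fin n)) : ℕ := sInf (fixVals π)

/-- `d n` is the number of derangements of `[n]`. -/
def d (n : ℕ) : ℕ := Set.ncard {π : Equiv.Perm (Fin n) | ∀ i, π i ≠ i}

/-- `a n k` is the number of permutations of `[n]` with at least one fixed point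
whose largest fixed point equals `k`. -/
def a (n k : ℕ) : ℕ := Set.ncard {π : Equiv.Perm (Fin n) | hasFP π ∧ lfp π = k}

/-- `b n k` is the number of permutations of `[n]` with at least one fixed point
whose smallest fixed point equals `k`. -/
def b (n k : ℕ) : ℕ := Set.ncard {π : Equiv.Perm (Fin n) | hasFP π ∧ sfp π = k}

/-- `alpha n` is the sum of the largest fixed points over all non-derangements of `[n]`. -/
def alpha (n : ℕ) : ℕ :=
  ∑ π ∈ Finset.univ.filter (fun π : Equiv.Perm (Fin n) => hasFP π), lfp π

/-- `beta n` is the sum of the smallest fixed points over all non-derangements of `[n]`. -/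
def beta (n : ℕ) : ℕ :=
  ∑ π ∈ Finset.univ.filter (fun π : Equiv.Perm (Fin n) => hasFP π), sfp π

/-!
Write `ℓ(π) = 0` for a derangement `π`. For each `π ∈ S_n`, the number `ℓ(π)` together with the
number of `j ∈ {0, …, n}` such that `ℓ(π) ≤ j` makes `n + 1`. Inserting a new fixed point at
position `j + 1` turns the pairs `(π, j)` with `ℓ(π) ≤ j` into the permutations of `[n + 1]` whose
largest fixed point is the inserted one, and every non-derangement arises exactly once in this way.
Hence `α_n` and `d_{n+1}` both complement the number of non-derangements of `[n + 1]` to `(n + 1)!`.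
-/

open Equiv Function Finset
open scoped Nat

section DoubleCounting

variable {ι : Type*} [Fintype ι]

theorem sum_add_sum_card_filter_le {m : ℕ} (f : ι → ℕ) (hf : ∀ i, f i ≤ m) :
    ∑ i, f i + ∑ j : Fin m, #{i | f i ≤ j} = m * Fintype.card ι := by
  have layer_cake : ∑ i, f i = ∑ j : Fin m, #{i | (j : ℕ) < f i} :=
    calc ∑ i, f i = ∑ i, #{j : Fin m | (j : ℕ) < f i} := by
          simp only [Fin.card_filter_val_lt, min_eq_right (hf _)]
      _ = ∑ j : Fin m, #{i | (j : ℕ) < f i} :=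
          sum_card_bipartiteAbove_eq_sum_card_bipartiteBelow fun i (j : Fin m) ↦ (j : ℕ) < f i
  have complementary (j : Fin m) : #{i | (j : ℕ) < f i} + #{i | f i ≤ j} = Fintype.card ι := by
    simpa only [not_lt, card_univ] using
      card_filter_add_card_filter_not (s := univ) fun i ↦ (j : ℕ) < f i
  rw [layer_cake, ← sum_add_distrib]
  simp only [complementary, sum_const, card_univ, Fintype.card_fin, smul_eq_mul]

theorem sum_card_filter_isGreatest {α : Type*} [Fintype α] [LinearOrder α] (s : ι → Set α) :
    ∑ a, #{i | IsGreatest (s i) a} = #{i | (s i).Nonempty} := by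
  have isGreatest_of_nonempty (i : ι) (h : (s i).Nonempty) : ∃ a, IsGreatest (s i) a :=
    (s i).exists_max_image id (s i).toFinite h
  rw [← card_biUnion]
  · congr 1
    ext i
    simpa using ⟨fun ⟨_, h⟩ ↦ h.nonempty, isGreatest_of_nonempty i⟩
  · intro a _ b _ hab
    exact disjoint_filter.2 fun i _ ha hb ↦ hab (ha.unique hb)

end DoubleCounting

section InsertFixedPoint

variable {n : ℕ}

/-- The bijection between the permutations of `Fin n` and the permutations of `Fin (n + 1)`
fixing `j`: insert the fixed point `j` and move the other points along `j.succAbove`. -/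
def insertFixedPoint (j : Fin (n + 1)) : Perm (Fin n) ≃ {σ : Perm (Fin (n + 1)) // σ j = j} :=
  (finSuccAboveEquiv j).permCongr.trans <|
    (Perm.subtypeEquivSubtypePerm (· ≠ j)).trans <| subtypeEquivRight fun σ ↦ by simp

theorem insertFixedPoint_apply_succAbove (j : Fin (n + 1)) (π : Perm (Fin n)) (i : Fin n) :
    (insertFixedPoint j π).1 (j.succAbove i) = j.succAbove (π i) := by
  have preimage : (finSuccAboveEquiv j).symm ⟨j.succAbove i, j.succAbove_ne i⟩ = i :=
    (finSuccAboveEquiv j).symm_apply_apply i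
  simp [insertFixedPoint, Perm.ofSubtype_apply_of_mem, preimage, finSuccAboveEquiv_apply]

theorem isGreatest_fixedPoints_insertFixedPoint_iff (j : Fin (n + 1)) (π : Perm (Fin n)) :
    IsGreatest (fixedPoints (insertFixedPoint j π).1) j ↔ ∀ i, π i = i → (i : ℕ) < j := by
  have succAbove_le_iff (i : Fin n) : j.succAbove i ≤ j ↔ (i : ℕ) < j := by
    rw [(Fin.succAbove_ne j i).le_iff_lt, Fin.succAbove_lt_iff_castSucc_lt, Fin.lt_def,
      Fin.val_castSucc]
  have fixed : j ∈ fixedPoints (insertFixedPoint j π).1 := (insertFixedPoint j π).2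
  simp only [IsGreatest, fixed, true_and, mem_upperBounds, mem_fixedPoints_iff,
    Fin.forall_iff_succAbove j, le_refl, implies_true, insertFixedPoint_apply_succAbove,
    Fin.succAbove_right_inj, succAbove_le_iff]

end InsertFixedPoint

section LargestFixedPoint

variable {n : ℕ}

theorem lfp_le_iff (π : Perm (Fin n)) (k : ℕ) : lfp π ≤ k ↔ ∀ i, π i = i → (i : ℕ) < k := by
  have bddAbove : BddAbove (fixVals π) := ⟨n, by rintro _ ⟨i, -, rfl⟩; exact i.2⟩
  constructor
  · intro h i hi
    exact (le_csSup bddAbove ⟨i, hi, rfl⟩).trans h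
  · intro h
    refine csSup_le' ?_
    rintro _ ⟨i, hi, rfl⟩
    exact h i hi

theorem lfp_le (π : Perm (Fin n)) : lfp π ≤ n :=
  (lfp_le_iff π n).2 fun i _ ↦ i.2

-- A derangement contributes `0` to the sum, since `lfp` is then `sSup ∅ = 0`.
theorem alpha_eq_sum_lfp (n : ℕ) : alpha n = ∑ π : Perm (Fin n), lfp π :=
  sum_filter_of_ne fun π _ ↦ not_imp_comm.1 fun h ↦
    Nat.le_zero.1 <| (lfp_le_iff π 0).2 fun i hi ↦ (h ⟨i, hi⟩).elim

theorem card_filter_lfp_le_eq_card_filter_isGreatest (j : Fin (n + 1)) :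
    #{π : Perm (Fin n) | lfp π ≤ j} =
      #{σ : Perm (Fin (n + 1)) | IsGreatest (fixedPoints σ) j} := by
  refine card_bij (fun π _ ↦ (insertFixedPoint j π).1) (fun π hπ ↦ ?_)
    (fun π _ ρ _ h ↦ (insertFixedPoint j).injective (Subtype.ext h)) fun σ hσ ↦ ?_
  · rw [mem_filter_univ] at hπ ⊢
    rwa [isGreatest_fixedPoints_insertFixedPoint_iff, ← lfp_le_iff]
  · rw [mem_filter_univ] at hσ
    obtain ⟨π, hπ⟩ := (insertFixedPoint j).surjective ⟨σ, hσ.1⟩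
    obtain rfl : (insertFixedPoint j π).1 = σ := congrArg Subtype.val hπ
    rw [isGreatest_fixedPoints_insertFixedPoint_iff, ← lfp_le_iff] at hσ
    exact ⟨π, by rwa [mem_filter_univ], rfl⟩

end LargestFixedPoint

theorem d_add_card_filter_fixedPoints_nonempty (n : ℕ) :
    d n + #{σ : Perm (Fin n) | (fixedPoints σ).Nonempty} = n ! := by
  have d_eq : d n = #{σ : Perm (Fin n) | ¬ (fixedPoints σ).Nonempty} := by
    rw [d, Set.ncard_eq_toFinset_card']
    congr 1
    ext σ
    simp [Set.Nonempty, IsFixedPt]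
  rw [d_eq, add_comm, card_filter_add_card_filter_not, card_univ, Fintype.card_perm,
    Fintype.card_fin]

theorem stmt0 (n : ℕ) (hn : 1 ≤ n) : alpha n = d (n + 1) := by
  have card_pairs : ∑ j : Fin (n + 1), #{π : Perm (Fin n) | lfp π ≤ j} =
      #{σ : Perm (Fin (n + 1)) | (fixedPoints σ).Nonempty} := by
    rw [← sum_card_filter_isGreatest]
    exact sum_congr rfl fun j _ ↦ card_filter_lfp_le_eq_card_filter_isGreatest j
  refine Nat.add_right_cancel (m := #{σ : Perm (Fin (n + 1)) | (fixedPoints σ).Nonempty}) ?_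
  calc alpha n + #{σ : Perm (Fin (n + 1)) | (fixedPoints σ).Nonempty}
      = ∑ π : Perm (Fin n), lfp π + ∑ j : Fin (n + 1), #{π : Perm (Fin n) | lfp π ≤ j} := by
        rw [alpha_eq_sum_lfp, card_pairs]
    _ = (n + 1) * Fintype.card (Perm (Fin n)) :=
        sum_add_sum_card_filter_le lfp fun π ↦ (lfp_le π).trans n.le_succ
    _ = (n + 1)! := by rw [Fintype.card_perm, Fintype.card_fin, Nat.factorial_succ]
    _ = d (n + 1) + #{σ : Perm (Fin (n + 1)) | (fixedPoints σ).Nonempty} :=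
        (d_add_card_filter_fixedPoints_nonempty (n + 1)).symm
end
end

section
/- For all n ≥ 2 and 1 ≤ k ≤ n, a_{n,k} = d_{n-1} + Σ_{j=1}^{k-1} a_{n-1,j}. -/
open Classical

noncomputable section

/-!
Deleting a fixed point `p` from `π` and renumbering is a bijection from the permutations of `[n]`
fixing `p` to the permutations of `[n - 1]`. Deletion does not move the fixed points below `p`, so
`p` is the largest fixed point of `π` exactly when all fixed points of the shorter permutation lie
below `p`: that permutation is a derangement, or its largest fixed point is one of `1, …, p - 1`.
-/

theorem succ_mem_upperBounds_iff {s : Set ℕ} {q : ℕ} :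
    q + 1 ∈ upperBounds s ↔ q ∈ upperBounds s ∨ IsGreatest s (q + 1) := by
  refine ⟨fun h ↦ ?_, ?_⟩
  · by_cases hq : q + 1 ∈ s
    · exact Or.inr ⟨hq, h⟩
    · exact Or.inl fun x hx ↦ Nat.le_of_lt_succ ((h hx).lt_of_ne (ne_of_mem_of_not_mem hx hq))
  · rintro (h | h)
    · exact upperBounds_mono_mem q.le_succ h
    · exact h.2

theorem ncard_setOf_mem_upperBounds {ι : Type*} [Finite ι] (s : ι → Set ℕ) (q : ℕ) :
    {i | q ∈ upperBounds (s i)}.ncard =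
      {i | 0 ∈ upperBounds (s i)}.ncard + ∑ j ∈ Finset.Icc 1 q, {i | IsGreatest (s i) j}.ncard := by
  induction q with
  | zero => simp
  | succ q ih =>
    have hunion : {i | q + 1 ∈ upperBounds (s i)} =
        {i | q ∈ upperBounds (s i)} ∪ {i | IsGreatest (s i) (q + 1)} :=
      Set.ext fun _ ↦ succ_mem_upperBounds_iff
    have hdisj : Disjoint {i | q ∈ upperBounds (s i)} {i | IsGreatest (s i) (q + 1)} :=
      Set.disjoint_left.2 fun _ hq hsucc ↦ Nat.not_succ_le_self q (hq hsucc.1)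
    rw [hunion, Set.ncard_union_eq hdisj, ih, Finset.sum_Icc_succ_top (by lia), add_assoc]

section ExtendDomain

open Function

variable {α β : Type*}

theorem range_extendDomain {P : α → Prop} [DecidablePred P] (f : β ≃ Subtype P) :
    Set.range (fun σ : Equiv.Perm β ↦ σ.extendDomain f) = {π | ∀ x, ¬P x → π x = x} := by
  ext π
  constructor
  · rintro ⟨σ, rfl⟩ x hx
    exact σ.extendDomain_apply_not_subtype f hx
  · intro hπ
    obtain ⟨τ, hτ⟩ := (Equiv.Perm.subtypeEquivSubtypePerm P).surjective ⟨π, hπ⟩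
    have hτ' : Equiv.Perm.ofSubtype τ = π := congrArg Subtype.val hτ
    refine ⟨f.symm.permCongr τ, ?_⟩
    ext x
    by_cases hx : P x
    · simp [← hτ', Equiv.Perm.extendDomain_apply_subtype _ f hx,
        Equiv.Perm.ofSubtype_apply_of_mem _ hx]
    · rw [hπ x hx]
      exact Equiv.Perm.extendDomain_apply_not_subtype _ f hx

theorem fixedPoints_extendDomain {P : α → Prop} [DecidablePred P] (f : β ≃ Subtype P)
    (σ : Equiv.Perm β) :
    fixedPoints (σ.extendDomain f) = {x | ¬P x} ∪ (fun b ↦ (f b : α)) '' fixedPoints σ := by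
  ext x
  by_cases hx : P x
  · obtain ⟨b, hb⟩ := f.surjective ⟨x, hx⟩
    obtain rfl : (f b : α) = x := congrArg Subtype.val hb
    simp [IsFixedPt, hx, Subtype.val_inj]
  · simp [IsFixedPt, hx, σ.extendDomain_apply_not_subtype f hx]

theorem ncard_setOf_isGreatest_fixedPoints [Preorder α] {p : α} (f : β ≃ {x // x ≠ p}) :
    {π : Equiv.Perm α | IsGreatest (fixedPoints π) p}.ncard =
      {σ : Equiv.Perm β | ∀ b ∈ fixedPoints σ, (f b : α) ≤ p}.ncard := by
  have hrange : {π : Equiv.Perm α | IsGreatest (fixedPoints π) p} ⊆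
      Set.range fun σ : Equiv.Perm β ↦ σ.extendDomain f := by
    rw [range_extendDomain]
    intro π hπ x hx
    obtain rfl := not_ne_iff.1 hx
    exact hπ.1
  have hpreimage : (fun σ : Equiv.Perm β ↦ σ.extendDomain f) ⁻¹'
      {π | IsGreatest (fixedPoints π) p} =
        {σ : Equiv.Perm β | ∀ b ∈ fixedPoints σ, (f b : α) ≤ p} := by
    ext σ
    rw [Set.mem_preimage, Set.mem_ofPred_eq, fixedPoints_extendDomain]
    simp [IsGreatest, mem_upperBounds]
  rw [← hpreimage]
  exact (Set.ncard_preimage_of_injective_subset_range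
    (Equiv.Perm.extendDomainHom_injective f) hrange).symm

end ExtendDomain

section FixVals

open Function

variable {n : ℕ}

theorem fixVals_eq_image (π : Equiv.Perm (Fin n)) :
    fixVals π = (fun i : Fin n ↦ (i : ℕ) + 1) '' fixedPoints π :=
  rfl

theorem hasFP_and_lfp_eq_iff_isGreatest (π : Equiv.Perm (Fin n)) (k : ℕ) :
    hasFP π ∧ lfp π = k ↔ IsGreatest (fixVals π) k := by
  have hbdd : BddAbove (fixVals π) := (Set.toFinite (fixedPoints π)).image _ |>.bddAbove
  constructor
  · rintro ⟨⟨i, hi⟩, rfl⟩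
    have hne : (fixVals π).Nonempty := ⟨_, i, hi, rfl⟩
    exact ⟨Nat.sSup_mem hne hbdd, fun _ ↦ le_csSup hbdd⟩
  · intro h
    obtain ⟨i, hi, -⟩ := h.1
    exact ⟨⟨i, hi⟩, h.csSup_eq⟩

theorem a_eq_ncard_isGreatest (n k : ℕ) :
    a n k = {π : Equiv.Perm (Fin n) | IsGreatest (fixVals π) k}.ncard := by
  simp only [a, hasFP_and_lfp_eq_iff_isGreatest]

theorem isGreatest_fixVals_iff (π : Equiv.Perm (Fin n)) (p : Fin n) :
    IsGreatest (fixVals π) (p + 1) ↔ IsGreatest (fixedPoints π) p := by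
  have hmono : StrictMono fun i : Fin n ↦ (i : ℕ) + 1 := fun _ _ h ↦ Nat.succ_lt_succ h
  exact hmono.map_isGreatest

theorem d_eq_ncard_zero_mem_upperBounds (n : ℕ) :
    d n = {π : Equiv.Perm (Fin n) | 0 ∈ upperBounds (fixVals π)}.ncard := by
  simp [d, fixVals_eq_image, mem_upperBounds, IsFixedPt]

theorem succAbove_le_self_iff (p : Fin (n + 1)) (i : Fin n) :
    p.succAbove i ≤ p ↔ (i : ℕ) + 1 ≤ p := by
  rw [(Fin.succAbove_ne p i).le_iff_lt, Fin.succAbove_lt_iff_succ_le, Fin.le_def, Fin.val_succ]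

theorem a_succ_eq_ncard_mem_upperBounds (p : Fin (n + 1)) :
    a (n + 1) (p + 1) = {σ : Equiv.Perm (Fin n) | (p : ℕ) ∈ upperBounds (fixVals σ)}.ncard := by
  simp only [a_eq_ncard_isGreatest, isGreatest_fixVals_iff]
  rw [ncard_setOf_isGreatest_fixedPoints (finSuccAboveEquiv p)]
  simp only [finSuccAboveEquiv_apply, succAbove_le_self_iff, fixVals_eq_image, mem_upperBounds,
    Set.forall_mem_image]

end FixVals

theorem stmt3 (n k : ℕ) (hn : 2 ≤ n) (hk1 : 1 ≤ k) (hkn : k ≤ n) :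
    a n k = d (n - 1) + ∑ j ∈ Finset.Icc 1 (k - 1), a (n - 1) j := by
  obtain ⟨m, rfl⟩ : ∃ m, n = m + 1 := ⟨n - 1, by lia⟩
  obtain ⟨q, rfl⟩ : ∃ q, k = q + 1 := ⟨k - 1, by lia⟩
  calc
    a (m + 1) (q + 1) = {σ : Equiv.Perm (Fin m) | q ∈ upperBounds (fixVals σ)}.ncard :=
      a_succ_eq_ncard_mem_upperBounds ⟨q, by lia⟩
    _ = d m + ∑ j ∈ Finset.Icc 1 q, a m j := by
      simp only [ncard_setOf_mem_upperBounds fixVals q, d_eq_ncard_zero_mem_upperBounds,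
        a_eq_ncard_isGreatest]
end
end

section
/- For all n ≥ 1 and 1 ≤ k ≤ n, the number of permutations of [n] whose largest fixed point equals k is equal to the number of permutations of [n-1] in which none of k, k+1, ..., n-1 is a fixed point. That is, a_{n,k} = |{σ ∈ S_{n-1} : σ(j) ≠ j for all j with k ≤ j ≤ n-1}|. -/
open Classical

noncomputable section

/-!
Deleting a point `b` from the ground set turns the permutations fixing `b` into the permutations of
the remaining points, and preserves whether each remaining point is fixed. The largest fixed point
of `π` is `k` exactly when `π` fixes `k` and no later point; once `k` is deleted and the remaining
points are relabelled in order, the later points `k + 1, …, n` become `k, …, n - 1`.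
-/

section ExtendDomain

open Equiv.Perm

variable {α β : Type*} {p : β → Prop} [DecidablePred p] (f : α ≃ Subtype p)

theorem extendDomain_apply_image_eq_self_iff (σ : Equiv.Perm α) (x : α) :
    σ.extendDomain f (f x) = f x ↔ σ x = x := by
  rw [extendDomain_apply_image, Subtype.coe_inj, f.apply_eq_iff_eq]

theorem exists_extendDomain_eq_iff (π : Equiv.Perm β) :
    (∃ σ : Equiv.Perm α, σ.extendDomain f = π) ↔ ∀ y, ¬p y → π y = y := by
  constructor
  · rintro ⟨σ, rfl⟩ y hy
    exact extendDomain_apply_not_subtype σ f hy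
  · intro hπ
    refine ⟨f.symm.permCongr ((Equiv.Perm.subtypeEquivSubtypePerm p).symm ⟨π, hπ⟩), ?_⟩
    ext y
    by_cases hy : p y
    · simp [extendDomain_apply_subtype _ f hy]
    · rw [extendDomain_apply_not_subtype _ f hy, hπ y hy]

end ExtendDomain

section FixedPoints

variable {α β : Type*} [LinearOrder β]

theorem isGreatest_fixedPoints_iff {g : β → β} {b : β} :
    IsGreatest (Function.fixedPoints g) b ↔ g b = b ∧ ∀ y, b < y → g y ≠ y :=
  and_congr_right fun _ => forall_congr' fun _ => by
    rw [← not_le, not_imp_not, Function.mem_fixedPoints, Function.IsFixedPt]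

theorem isGreatest_fixedPoints_extendDomain_iff {b : β} (f : α ≃ {y // y ≠ b})
    (σ : Equiv.Perm α) :
    IsGreatest (Function.fixedPoints (σ.extendDomain f)) b ↔ ∀ x, b < f x → σ x ≠ x := by
  have fixes_b : σ.extendDomain f b = b :=
    Equiv.Perm.extendDomain_apply_not_subtype σ f (not_not.2 rfl)
  rw [isGreatest_fixedPoints_iff, and_iff_right fixes_b]
  constructor
  · intro h x hx
    exact (extendDomain_apply_image_eq_self_iff f σ x).not.1 (h _ hx)
  · intro h y hy
    obtain ⟨x, hx⟩ := f.surjective ⟨y, hy.ne'⟩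
    obtain rfl : (f x : β) = y := congrArg Subtype.val hx
    exact (extendDomain_apply_image_eq_self_iff f σ x).not.2 (h x hy)

theorem ncard_isGreatest_fixedPoints {b : β} (f : α ≃ {y // y ≠ b}) :
    {π : Equiv.Perm β | IsGreatest (Function.fixedPoints π) b}.ncard =
      {σ : Equiv.Perm α | ∀ x, b < f x → σ x ≠ x}.ncard := by
  rw [← Set.ncard_image_of_injective _ (Equiv.Perm.extendDomainHom_injective f)]
  congr 1
  ext π
  constructor
  · intro hπ
    have fixes_b : ∀ y, ¬y ≠ b → π y = y := fun y hy => not_not.1 hy ▸ hπ.1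
    obtain ⟨σ, rfl⟩ := (exists_extendDomain_eq_iff f π).2 fixes_b
    exact ⟨σ, (isGreatest_fixedPoints_extendDomain_iff f σ).1 hπ, rfl⟩
  · rintro ⟨σ, hσ, rfl⟩
    exact (isGreatest_fixedPoints_extendDomain_iff f σ).2 hσ

end FixedPoints

theorem nonempty_and_csSup_eq_iff_isGreatest {α : Type*} [ConditionallyCompleteLinearOrder α]
    {s : Set α} (hs : s.Finite) {x : α} : s.Nonempty ∧ sSup s = x ↔ IsGreatest s x := by
  constructor
  · rintro ⟨hne, rfl⟩
    exact ⟨hne.csSup_mem hs, fun _ hy => le_csSup hs.bddAbove hy⟩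
  · exact fun h => ⟨h.nonempty, h.csSup_eq⟩

theorem fixVals_eq_image_fixedPoints {n : ℕ} (π : Equiv.Perm (Fin n)) :
    fixVals π = (fun i : Fin n => (i : ℕ) + 1) '' Function.fixedPoints π :=
  rfl

theorem hasFP_and_lfp_eq_iff {n : ℕ} (π : Equiv.Perm (Fin n)) (b : Fin n) :
    hasFP π ∧ lfp π = b + 1 ↔ IsGreatest (Function.fixedPoints π) b := by
  have succ_strictMono : StrictMono fun i : Fin n => (i : ℕ) + 1 :=
    fun _ _ hij => Nat.succ_lt_succ hij
  have hasFP_iff : hasFP π ↔ (fixVals π).Nonempty := Set.image_nonempty.symm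
  have finite_fixVals : (fixVals π).Finite := (Set.toFinite _).image _
  rw [hasFP_iff, lfp, nonempty_and_csSup_eq_iff_isGreatest finite_fixVals,
    fixVals_eq_image_fixedPoints]
  exact succ_strictMono.map_isGreatest

theorem stmt5 (n k : ℕ) (hn : 1 ≤ n) (hk1 : 1 ≤ k) (hkn : k ≤ n) :
    a n k = Set.ncard {σ : Equiv.Perm (Fin (n - 1)) |
      ∀ j : Fin (n - 1), k ≤ (j : ℕ) + 1 → σ j ≠ j} := by
  obtain ⟨m, rfl⟩ : ∃ m, n = m + 1 := Nat.exists_eq_add_of_le' hn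
  obtain ⟨b, rfl⟩ : ∃ b : Fin (m + 1), k = b + 1 :=
    ⟨⟨k - 1, by omega⟩, (Nat.sub_add_cancel hk1).symm⟩
  have lt_relabel_iff (j : Fin m) : b < finSuccAboveEquiv b j ↔ (b : ℕ) + 1 ≤ j + 1 := by
    rw [finSuccAboveEquiv_apply, Fin.lt_succAbove_iff_le_castSucc, Fin.le_def, Fin.val_castSucc,
      Nat.add_le_add_iff_right]
  simp only [a, hasFP_and_lfp_eq_iff, ncard_isGreatest_fixedPoints (finSuccAboveEquiv b),
    lt_relabel_iff]
  rfl
end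
end

section
/- For all n ≥ 1, the number of pairs (π, i) where π is a permutation of [n] with at least one fixed point and i is an integer with 1 ≤ i ≤ ℓ(π), equals d_{n+1}, the number of derangements of [n+1]. -/
open Classical

noncomputable section

/-!
Let `e n j` be the number of permutations of `Fin n` with no fixed point `≥ j`. Splitting the
permutations of `Fin (n + 1)` with no fixed point `≥ j + 1` according to whether they fix `j`, and
deleting `j` if they do, gives Euler's difference table `e (n + 1) (j + 1) = e (n + 1) j + e n j`.
It telescopes to `(n + 1)! = d (n + 1) + ∑ j ∈ range (n + 1), e n j`, where `e n n = n!`. A pair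
`(π, j + 1)` has `j + 1 ≤ ℓ(π)` exactly when `π` has a fixed point `≥ j` (0-based), so the number
of pairs is `∑ j ∈ range n, (n! - e n j) = (n + 1)! - ∑ j ∈ range (n + 1), e n j = d (n + 1)`.
-/

open Equiv Finset Nat

section DerangementsOn

variable {α β : Type*}

/-- The permutations of `α` with no fixed point in `s`, interpolating between all permutations
(`s = ∅`) and `derangements α` (`s = Set.univ`). -/
def derangementsOn (s : Set α) : Set (Perm α) := {π | ∀ x ∈ s, π x ≠ x}

lemma derangementsOn_empty : derangementsOn (∅ : Set α) = Set.univ := by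
  simp [derangementsOn]

lemma derangementsOn_insert (x : α) (s : Set α) :
    derangementsOn (insert x s) = derangementsOn s \ {π | π x = x} := by
  ext π
  simp [derangementsOn, and_comm]

section extendDomain

variable {p : α → Prop} [DecidablePred p] (e : β ≃ Subtype p)

lemma extendDomain_mem_derangementsOn_iff {s : Set α} (hs : ∀ x ∈ s, p x) (π : Perm β) :
    π.extendDomain e ∈ derangementsOn s ↔ π ∈ derangementsOn {y | (e y : α) ∈ s} := by
  have extendDomain_fixes_iff (y : β) : π.extendDomain e (e y) = e y ↔ π y = y := by
    rw [Perm.extendDomain_apply_image, Subtype.coe_inj, e.apply_eq_iff_eq]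
  constructor
  · exact fun h y hy hπ => h (e y) hy ((extendDomain_fixes_iff y).2 hπ)
  · intro h x hx hπ
    obtain ⟨y, hy⟩ := e.surjective ⟨x, hs x hx⟩
    obtain rfl : (e y : α) = x := congrArg Subtype.val hy
    exact h y hx ((extendDomain_fixes_iff y).1 hπ)

lemma range_extendDomain_s6 :
    Set.range (fun π : Perm β => π.extendDomain e) = {σ | ∀ x, ¬p x → σ x = x} := by
  ext σ
  constructor
  · rintro ⟨π, rfl⟩ x hx
    exact π.extendDomain_apply_not_subtype e hx
  · intro hσ
    have mem_iff (x : α) : p (σ x) ↔ p x := by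
      by_cases hx : p x
      · refine iff_of_true (by_contra fun hσx => hσx ?_) hx
        rwa [σ.injective (hσ _ hσx)]
      · rw [hσ x hx]
    refine ⟨e.symm.permCongr (σ.subtypePerm mem_iff), Equiv.ext fun x => ?_⟩
    by_cases hx : p x
    · simp [Perm.extendDomain_apply_subtype, hx]
    · rw [Perm.extendDomain_apply_not_subtype _ _ hx, hσ x hx]

end extendDomain

lemma ncard_derangementsOn_inter_fixing {x : α} (e : β ≃ {y // y ≠ x}) {s : Set α} (hx : x ∉ s) :
    (derangementsOn s ∩ {σ | σ x = x}).ncard = (derangementsOn {y | (e y : α) ∈ s}).ncard := by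
  have hs : ∀ y ∈ s, y ≠ x := fun y hy => ne_of_mem_of_not_mem hy hx
  have fixing_eq_range :
      {σ : Perm α | σ x = x} = Set.range fun π : Perm β => π.extendDomain e := by
    simp [range_extendDomain_s6]
  have preimage_eq : (fun π : Perm β => π.extendDomain e) ⁻¹' derangementsOn s =
      derangementsOn {y | (e y : α) ∈ s} :=
    Set.ext (extendDomain_mem_derangementsOn_iff e hs)
  rw [fixing_eq_range, ← Set.image_preimage_eq_inter_range, preimage_eq]
  exact Set.ncard_image_of_injective _ (Perm.extendDomainHom_injective e)

lemma ncard_derangementsOn_insert_add [Finite α] {x : α} (e : β ≃ {y // y ≠ x}) {s : Set α}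
    (hx : x ∉ s) :
    (derangementsOn (insert x s)).ncard + (derangementsOn {y | (e y : α) ∈ s}).ncard =
      (derangementsOn s).ncard := by
  rw [derangementsOn_insert, ← ncard_derangementsOn_inter_fixing e hx, add_comm]
  exact Set.ncard_inter_add_ncard_sdiff_eq_ncard _ _

end DerangementsOn

/-- Euler's difference table of the factorials: the number of permutations of `Fin n` with no
fixed point `≥ j` (0-based). -/
def eulerDifference (n j : ℕ) : ℕ := (derangementsOn {k : Fin n | j ≤ k}).ncard

lemma eulerDifference_zero_right (n : ℕ) : eulerDifference n 0 = d n := by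
  simp [eulerDifference, d, derangementsOn]

lemma eulerDifference_self (n : ℕ) : eulerDifference n n = n ! := by
  have hempty : {k : Fin n | n ≤ k} = ∅ := by ext k; simp
  rw [eulerDifference, hempty, derangementsOn_empty, Set.ncard_univ, Nat.card_perm, Nat.card_fin]

lemma ncard_compl_derangementsOn_add_eulerDifference (n j : ℕ) :
    (derangementsOn {k : Fin n | j ≤ k})ᶜ.ncard + eulerDifference n j = n ! := by
  rw [eulerDifference, add_comm, Set.ncard_add_ncard_compl, Nat.card_perm, Nat.card_fin]

lemma eulerDifference_succ_succ {n j : ℕ} (hj : j ≤ n) :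
    eulerDifference (n + 1) (j + 1) = eulerDifference (n + 1) j + eulerDifference n j := by
  let x : Fin (n + 1) := ⟨j, Nat.lt_succ_of_le hj⟩
  have insert_eq : {k : Fin (n + 1) | j ≤ k} = insert x {k : Fin (n + 1) | j + 1 ≤ k} := by
    ext k
    simp only [x, Set.mem_ofPred_eq, Set.mem_insert_iff, Fin.ext_iff]
    omega
  have deleted_eq : {k : Fin n | j ≤ k} =
      {k | (finSuccAboveEquiv x k : Fin (n + 1)) ∈ {k : Fin (n + 1) | j + 1 ≤ k}} := by
    ext k
    exact (Fin.lt_succAbove_iff_le_castSucc x k).symm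
  rw [eulerDifference, eulerDifference, eulerDifference, insert_eq, deleted_eq]
  exact (ncard_derangementsOn_insert_add _ (by simp [x])).symm

lemma d_succ_add_sum_eulerDifference {n m : ℕ} (hm : m ≤ n + 1) :
    d (n + 1) + ∑ j ∈ range m, eulerDifference n j = eulerDifference (n + 1) m := by
  induction m with
  | zero => simp [eulerDifference_zero_right]
  | succ m ih =>
    rw [sum_range_succ, ← add_assoc, ih (by omega), eulerDifference_succ_succ (by omega)]

lemma lt_lfp_iff {n : ℕ} (π : Perm (Fin n)) (j : ℕ) :
    j < lfp π ↔ ∃ k : Fin n, π k = k ∧ j ≤ k := by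
  have hbdd : BddAbove (fixVals π) := ⟨n, by rintro _ ⟨k, -, rfl⟩; exact k.isLt⟩
  rw [lfp, lt_csSup_iff' hbdd]
  simp [fixVals]

lemma setOf_le_lfp_eq_iUnion (n : ℕ) :
    {p : Perm (Fin n) × ℕ | hasFP p.1 ∧ 1 ≤ p.2 ∧ p.2 ≤ lfp p.1} =
      ⋃ j : Fin n, (derangementsOn {k : Fin n | (j : ℕ) ≤ k})ᶜ ×ˢ {(j : ℕ) + 1} := by
  ext ⟨π, i⟩
  have hcompl (j : ℕ) : π ∈ (derangementsOn {k : Fin n | j ≤ k})ᶜ ↔ j < lfp π := by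
    simp [derangementsOn, lt_lfp_iff, and_comm]
  simp only [Set.mem_ofPred_eq, Set.mem_iUnion, Set.mem_prod, hcompl, Set.mem_singleton_iff]
  constructor
  · rintro ⟨-, hi, hle⟩
    obtain ⟨j, rfl⟩ := Nat.exists_eq_add_of_le' hi
    obtain ⟨k, -, hjk⟩ := (lt_lfp_iff π j).1 hle
    exact ⟨⟨j, hjk.trans_lt k.isLt⟩, hle, rfl⟩
  · rintro ⟨j, hlt, rfl⟩
    obtain ⟨k, hk, -⟩ := (lt_lfp_iff π j).1 hlt
    exact ⟨⟨k, hk⟩, Nat.succ_pos _, hlt⟩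

lemma ncard_setOf_le_lfp_add_sum_eulerDifference (n : ℕ) :
    Set.ncard {p : Perm (Fin n) × ℕ | hasFP p.1 ∧ 1 ≤ p.2 ∧ p.2 ≤ lfp p.1} +
      ∑ j ∈ range n, eulerDifference n j = n * n ! := by
  have hdisj : Pairwise (Function.onFun Disjoint fun j : Fin n =>
      (derangementsOn {k : Fin n | (j : ℕ) ≤ k})ᶜ ×ˢ {(j : ℕ) + 1}) := fun i j hij =>
    Set.disjoint_prod.2 (Or.inr (by simpa [Fin.ext_iff] using hij))
  rw [setOf_le_lfp_eq_iUnion, Set.ncard_iUnion_of_finite (fun _ => Set.toFinite _) hdisj,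
    finsum_eq_sum_of_fintype, ← Fin.sum_univ_eq_sum_range, ← sum_add_distrib]
  simp only [Set.ncard_prod, Set.ncard_singleton, mul_one,
    ncard_compl_derangementsOn_add_eulerDifference, sum_const, Finset.card_fin, smul_eq_mul]

theorem stmt6 (n : ℕ) (hn : 1 ≤ n) :
    Set.ncard {p : Equiv.Perm (Fin n) × ℕ | hasFP p.1 ∧ 1 ≤ p.2 ∧ p.2 ≤ lfp p.1} =
      d (n + 1) := by
  have hpairs := ncard_setOf_le_lfp_add_sum_eulerDifference n
  have htelescope : d (n + 1) + ∑ j ∈ range (n + 1), eulerDifference n j = (n + 1) ! := by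
    rw [d_succ_add_sum_eulerDifference le_rfl, eulerDifference_self]
  rw [sum_range_succ, eulerDifference_self, Nat.factorial_succ, Nat.succ_mul] at htelescope
  omega
end
end

section
/- For all n ≥ 1, α_n + β_n = (n+1)·(n! - d_n), where α_n is the sum of the largest fixed points and β_n is the sum of the smallest fixed points over all permutations of [n] with at least one fixed point. -/
open Classical

noncomputable section

/-!
Conjugation by the reversal `i ↦ n + 1 - i` permutes `S_n` and reflects fixed-point sets, so it
turns the largest fixed point `k` of `π` into the smallest fixed point `n + 1 - k` of its conjugate.
Reindexing `β_n` by this conjugation, each permutation with a fixed point contributes exactly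
`n + 1` to `α_n + β_n`.
-/

lemma sSup_add_sInf_image_tsub {s : Set ℕ} {m : ℕ} (hs : s.Nonempty) (hm : s ⊆ Set.Iic m) :
    sSup s + sInf ((m - ·) '' s) = m := by
  have hmax : IsGreatest s (sSup s) := ⟨Nat.sSup_mem hs ⟨m, hm⟩, fun _ ↦ le_csSup ⟨m, hm⟩⟩
  have hmin : IsLeast ((m - ·) '' s) (m - sSup s) := antitone_const_tsub.map_isGreatest hmax
  rw [hmin.csInf_eq, Nat.add_sub_of_le (hm hmax.1)]

lemma permCongr_apply_apply_eq_iff {α β : Type*} (e : α ≃ β) (π : Equiv.Perm α) (i : α) :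
    e.permCongr π (e i) = e i ↔ π i = i := by
  simp only [Equiv.permCongr_apply, Equiv.symm_apply_apply, EmbeddingLike.apply_eq_iff_eq]

section

variable {n : ℕ} (π : Equiv.Perm (Fin n))

lemma fixVals_subset_Iic : fixVals π ⊆ Set.Iic n := by
  rintro _ ⟨i, -, rfl⟩
  exact i.isLt

lemma fixVals_nonempty_iff : (fixVals π).Nonempty ↔ hasFP π :=
  ⟨fun ⟨_, i, hi, _⟩ ↦ ⟨i, hi⟩, fun ⟨i, hi⟩ ↦ ⟨_, i, hi, rfl⟩⟩

lemma fixVals_permCongr_revPerm :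
    fixVals (Fin.revPerm.permCongr π) = (n + 1 - ·) '' fixVals π := by
  have reflect (i : Fin n) : (Fin.revPerm i : ℕ) + 1 = n + 1 - (i + 1) := by
    rw [Fin.revPerm_apply, Fin.val_rev]
    lia
  ext k
  constructor
  · rintro ⟨j, hj, rfl⟩
    obtain ⟨i, rfl⟩ := Fin.revPerm.surjective j
    exact ⟨i + 1, ⟨i, (permCongr_apply_apply_eq_iff _ π i).1 hj, rfl⟩, (reflect i).symm⟩
  · rintro ⟨_, ⟨i, hi, rfl⟩, rfl⟩
    exact ⟨Fin.revPerm i, (permCongr_apply_apply_eq_iff _ π i).2 hi, reflect i⟩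

lemma hasFP_permCongr_revPerm : hasFP (Fin.revPerm.permCongr π) ↔ hasFP π := by
  rw [← fixVals_nonempty_iff, fixVals_permCongr_revPerm, Set.image_nonempty, fixVals_nonempty_iff]

variable {π} in
lemma lfp_add_sfp_permCongr_revPerm (h : hasFP π) :
    lfp π + sfp (Fin.revPerm.permCongr π) = n + 1 := by
  rw [lfp, sfp, fixVals_permCongr_revPerm]
  exact sSup_add_sInf_image_tsub ((fixVals_nonempty_iff π).2 h)
    ((fixVals_subset_Iic π).trans (Set.Iic_subset_Iic.2 n.le_succ))

end

lemma sum_sfp_permCongr_revPerm (n : ℕ) :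
    ∑ π : Equiv.Perm (Fin n) with hasFP π, sfp (Fin.revPerm.permCongr π) = beta n :=
  Finset.sum_equiv Fin.revPerm.permCongr
    (by simp only [Finset.mem_filter_univ, hasFP_permCongr_revPerm, implies_true]) fun _ _ ↦ rfl

lemma alpha_add_beta (n : ℕ) :
    alpha n + beta n = (n + 1) * Finset.card {π : Equiv.Perm (Fin n) | hasFP π} := by
  calc alpha n + beta n
    _ = ∑ π : Equiv.Perm (Fin n) with hasFP π, (lfp π + sfp (Fin.revPerm.permCongr π)) := by
      rw [Finset.sum_add_distrib, sum_sfp_permCongr_revPerm, alpha]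
    _ = ∑ π : Equiv.Perm (Fin n) with hasFP π, (n + 1) :=
      Finset.sum_congr rfl fun _ hπ ↦
        lfp_add_sfp_permCongr_revPerm ((Finset.mem_filter_univ _).1 hπ)
    _ = (n + 1) * Finset.card {π : Equiv.Perm (Fin n) | hasFP π} := by
      rw [Finset.sum_const, smul_eq_mul, mul_comm]

lemma d_eq_card_filter_not_hasFP (n : ℕ) :
    d n = Finset.card {π : Equiv.Perm (Fin n) | ¬ hasFP π} := by
  simp only [d, hasFP, not_exists, Set.ncard_eq_toFinset_card', Set.toFinset_ofPred, ne_eq]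

lemma card_filter_hasFP_add_d (n : ℕ) :
    Finset.card {π : Equiv.Perm (Fin n) | hasFP π} + d n = n.factorial := by
  rw [d_eq_card_filter_not_hasFP, Finset.card_filter_add_card_filter_not, Finset.card_univ,
    Fintype.card_perm, Fintype.card_fin]

theorem stmt10 (n : ℕ) (hn : 1 ≤ n) :
    ((alpha n : ℤ) + beta n) = (n + 1) * (n.factorial - d n) := by
  rw [← card_filter_hasFP_add_d n, Nat.cast_add, add_sub_cancel_right]
  exact_mod_cast alpha_add_beta n
end
end

section
/- For all n ≥ 1, the derangement numbers satisfy the recurrence d_n = Σ_{j=2}^n (j-1)·C(n,j)·d_{n-j}, where C(n,j) is the binomial coefficient. -/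
open Classical

noncomputable section

/-
For a permutation `π` of an `n`-element set, let `fix π` be its number of fixed points. There are
`C(n, j) * d (n - j)` permutations with `fix π = j`, so the right-hand side is the sum over all `π`
of `fix π - 1`, truncated at zero. By Burnside's lemma for the transitive action of the symmetric
group, the average of `fix π` is one, so without truncation this sum would vanish. Truncation raises
it by one for each derangement and changes no other term.
-/

theorem sum_card_fixedBy_eq_card_of_isPretransitive (G X : Type*) [Group G] [MulAction G X]
    [Nonempty X] [MulAction.IsPretransitive G X] [Fintype G]
    [∀ g : G, Fintype (MulAction.fixedBy X g)] :
    ∑ g : G, Fintype.card (MulAction.fixedBy X g) = Fintype.card G := by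
  obtain ⟨uniqueOrbit⟩ :=
    (MulAction.pretransitive_iff_unique_quotient_of_nonempty G X).1 inferInstance
  have : Fintype (MulAction.orbitRel.Quotient G X) := Unique.fintype
  calc
    ∑ g : G, Fintype.card (MulAction.fixedBy X g) =
        Fintype.card (MulAction.orbitRel.Quotient G X) * Fintype.card G :=
      MulAction.sum_card_fixedBy_eq_card_orbits_mul_card_group G X
    _ = Fintype.card G := by rw [Fintype.card_unique, one_mul]

section FixedPoints

open Finset Equiv

variable {α : Type*} [Fintype α] [DecidableEq α]

theorem card_filter_fixedPoints_eq (s : Finset α) :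
    #{π : Perm α | ({x | π x = x} : Finset α) = s} =
      numDerangements (Fintype.card α - #s) := by
  have fixed_eq_iff (π : Perm α) :
      ({x | π x = x} : Finset α) = s ↔ ∀ x, ¬x ∉ s ↔ x ∈ Function.fixedPoints π := by
    simp only [Finset.ext_iff, mem_filter_univ, not_not, Function.mem_fixedPoints,
      Function.IsFixedPt, iff_comm]
  calc
    #{π : Perm α | ({x | π x = x} : Finset α) = s} =
        Fintype.card (derangements {x // x ∉ s}) := by
      simp only [fixed_eq_iff]
      rw [← Fintype.card_subtype]
      exact Fintype.card_congr (derangements.subtypeEquiv (· ∉ s)).symm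
    _ = numDerangements (Fintype.card α - #s) := by
      rw [card_derangements_eq_numDerangements, Fintype.card_subtype_compl, Fintype.card_coe]

theorem sum_apply_card_fixedPoints {M : Type*} [AddCommMonoid M] (f : ℕ → M) :
    ∑ π : Perm α, f #{x | π x = x} =
      ∑ j ∈ range (Fintype.card α + 1),
        (Fintype.card α).choose j • numDerangements (Fintype.card α - j) • f j :=
  calc
    ∑ π : Perm α, f #{x | π x = x} =
        ∑ s : Finset α, #{π : Perm α | ({x | π x = x} : Finset α) = s} • f #s := by
      simp only [← sum_const, sum_fiberwise' univ _ fun s : Finset α ↦ f #s]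
    _ = ∑ s : Finset α, numDerangements (Fintype.card α - #s) • f #s := by
      simp only [card_filter_fixedPoints_eq]
    _ = _ := by
      rw [← powerset_univ, sum_powerset_apply_card fun j ↦
        numDerangements (Fintype.card α - j) • f j, card_univ]

theorem sum_card_fixedPoints_eq_card_perm [Nonempty α] :
    ∑ π : Perm α, #{x | π x = x} = Fintype.card (Perm α) := by
  rw [← sum_card_fixedBy_eq_card_of_isPretransitive (Perm α) α]
  exact sum_congr rfl fun π _ ↦ (Fintype.card_subtype _).symm

theorem numDerangements_card_eq_sum_card_fixedPoints_sub_one [Nonempty α] :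
    numDerangements (Fintype.card α) = ∑ π : Perm α, (#{x | π x = x} - 1) := by
  have numDerangements_eq_sum : numDerangements (Fintype.card α) =
      ∑ π : Perm α, if #{x | π x = x} = 0 then 1 else 0 := by
    simp only [card_eq_zero, sum_boole, card_filter_fixedPoints_eq, card_empty, Nat.sub_zero,
      Nat.cast_id]
  have truncation (k : ℕ) : (if k = 0 then 1 else 0) + k = (k - 1) + 1 := by grind
  apply Nat.add_right_cancel (m := Fintype.card (Perm α))
  calc
    numDerangements (Fintype.card α) + Fintype.card (Perm α) =
        ∑ π : Perm α, ((if #{x | π x = x} = 0 then 1 else 0) + #{x | π x = x}) := by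
      rw [sum_add_distrib, numDerangements_eq_sum, sum_card_fixedPoints_eq_card_perm]
    _ = ∑ π : Perm α, (#{x | π x = x} - 1) + Fintype.card (Perm α) := by
      simp only [truncation, sum_add_distrib, sum_const, card_univ, smul_eq_mul, mul_one]

end FixedPoints

theorem d_eq_numDerangements (n : ℕ) : d n = numDerangements n := by
  rw [← card_derangements_fin_eq_numDerangements, ← Nat.card_eq_fintype_card]
  exact (Nat.card_coe_set_eq _).symm

theorem stmt15 (n : ℕ) (hn : 1 ≤ n) :
    d n = ∑ j ∈ Finset.Icc 2 n, (j - 1) * n.choose j * d (n - j) := by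
  have : NeZero n := ⟨by lia⟩
  calc
    d n = ∑ π : Equiv.Perm (Fin n), (Finset.card {x | π x = x} - 1) := by
      rw [d_eq_numDerangements, ← numDerangements_card_eq_sum_card_fixedPoints_sub_one,
        Fintype.card_fin]
    _ = ∑ j ∈ Finset.range (n + 1), n.choose j * (d (n - j) * (j - 1)) := by
      simp only [sum_apply_card_fixedPoints (· - 1), Fintype.card_fin, smul_eq_mul,
        d_eq_numDerangements]
    _ = ∑ j ∈ Finset.Icc 2 n, n.choose j * (d (n - j) * (j - 1)) :=
      (Finset.sum_subset (by grind) (by grind)).symm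
    _ = ∑ j ∈ Finset.Icc 2 n, (j - 1) * n.choose j * d (n - j) :=
      Finset.sum_congr rfl fun j _ ↦ by ring
end
end
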